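/- arXiv:1101.1800 — 3 statements merged into one kernel-verified Lean document; each statement's English description precedes it below -/
import Mathlib

section
/- For every x ∈ 𝓡 with ‖x‖ ≻ ι(0), one has x ⊗ x⁻¹ ∼ ι(1). -/
/-- The ambient space `𝓡` of decimal representations: an integer part together
with a sequence of digits in `{0,…,9}`. -/
abbrev DecimalRep := ℤ × (ℕ → Fin 10)

namespace DecimalRep

open scoped Classical

/-- The truncation `[x]_k = x₀ + ∑_{i=1}^k x_i / 10^i` of `x` up to the `k`-th
digit, as a rational number. -/
def trunc (x : DecimalRep) (k : ℕ) : ℚ :=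
  (x.1 : ℚ) + ∑ i ∈ Finset.range k, ((x.2 i : ℕ) : ℚ) / 10 ^ (i + 1)

/-- The order `⪯` on `𝓡`: `x ⪯ y` iff every truncation of `x` is at most the
corresponding truncation of `y`. -/
def le (x y : DecimalRep) : Prop := ∀ k : ℕ, trunc x k ≤ trunc y k

/-- The strict order `≺` on `𝓡`. -/
def lt (x y : DecimalRep) : Prop := le x y ∧ x ≠ y

/-- Two decimal representations are equivalent ("have no gap") iff there is no
third element lying between them. -/
def equiv (x y : DecimalRep) : Prop :=
  ¬ ∃ z : DecimalRep, z ≠ x ∧ z ≠ y ∧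
      ((le x z ∧ le z y) ∨ (le y z ∧ le z x))

/-- `𝓡₉`: decimal representations ending in an infinite string of nines. -/
def allNines (x : DecimalRep) : Prop := ∃ N : ℕ, ∀ k ≥ N, x.2 k = 9

/-- `ℚ_F`: decimal representations ending in an infinite string of zeros. -/
def finiteDec (x : DecimalRep) : Prop := ∃ N : ℕ, ∀ k ≥ N, x.2 k = 0

/-- The decimal expansion map `ι : ℚ → 𝓡`, satisfying
`[ι(α)]_k = ⌊10^k·α⌋/10^k` for all `k`. -/
def iota (α : ℚ) : DecimalRep :=
  (⌊α⌋, fun k => ⟨(⌊α * 10 ^ (k + 1)⌋ % 10).toNat, by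
    have h1 : (0 : ℤ) ≤ ⌊α * 10 ^ (k + 1)⌋ % 10 := Int.emod_nonneg _ (by norm_num)
    have h2 : ⌊α * 10 ^ (k + 1)⌋ % 10 < 10 := Int.emod_lt_of_pos _ (by norm_num)
    omega⟩)

/-- `M` is a least upper bound of `W` in `(𝓡,⪯)`. -/
def IsLub (W : Set DecimalRep) (M : DecimalRep) : Prop :=
  (∀ w ∈ W, le w M) ∧ ∀ M' : DecimalRep, (∀ w ∈ W, le w M') → le M M'

/-- `M` is a greatest lower bound of `W` in `(𝓡,⪯)`. -/
def IsGlb (W : Set DecimalRep) (M : DecimalRep) : Prop :=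
  (∀ w ∈ W, le M w) ∧ ∀ M' : DecimalRep, (∀ w ∈ W, le M' w) → le M' M

/-- The least upper bound of a set in `(𝓡,⪯)` (junk value if none exists). -/
noncomputable def sup (W : Set DecimalRep) : DecimalRep :=
  if h : ∃ M, IsLub W M then h.choose else default

/-- The greatest lower bound of a set in `(𝓡,⪯)` (junk value if none exists). -/
noncomputable def inf (W : Set DecimalRep) : DecimalRep :=
  if h : ∃ M, IsGlb W M then h.choose else default

/-- Addition `x ⊕ y := sup {ι([x]_k + [y]_k) : k ∈ ℕ}` on `𝓡`. -/
noncomputable def add (x y : DecimalRep) : DecimalRep :=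
  sup { z | ∃ k : ℕ, z = iota (trunc x k + trunc y k) }

/-- The "additive inverse" map `Ψ(x₀.x₁x₂⋯) = (−1−x₀).(9−x₁)(9−x₂)⋯`. -/
def psi (x : DecimalRep) : DecimalRep :=
  (-1 - x.1, fun k => ⟨9 - (x.2 k).val, by have := (x.2 k).isLt; omega⟩)

/-- The signal map: `0` on the nonnegative part, `1` on the negative part. -/
noncomputable def sign (x : DecimalRep) : ℕ :=
  if le (iota 0) x then 0 else 1

/-- The absolute value `‖x‖ := max {x, Ψ(x)}` with respect to `⪯`. -/
noncomputable def norm (x : DecimalRep) : DecimalRep :=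
  if le x (psi x) then psi x else x

/-- Multiplication
`x ⊗ y := Ψ^(sign x + sign y) (sup {ι([‖x‖]_k · [‖y‖]_k) : k ∈ ℕ})` on `𝓡`. -/
noncomputable def mul (x y : DecimalRep) : DecimalRep :=
  psi^[sign x + sign y]
    (sup { z | ∃ k : ℕ, z = iota (trunc (norm x) k * trunc (norm y) k) })

/-- The multiplicative inverse
`x⁻¹ := Ψ^(sign x) (inf {ι(1/[‖x‖]_k) : k ∈ ℕ, [‖x‖]_k > 0})`. -/
noncomputable def inv (x : DecimalRep) : DecimalRep :=
  psi^[sign x]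
    (inf { z | ∃ k : ℕ, 0 < trunc (norm x) k ∧ z = iota (1 / trunc (norm x) k) })

/-- A sequence of rationals is Cauchy. -/
def IsCauchy (x : ℕ → ℚ) : Prop :=
  ∀ ε : ℚ, 0 < ε → ∃ N : ℕ, ∀ m n : ℕ, N ≤ m → N ≤ n → |x m - x n| < ε

/-- The upper limit `inf { sup {f k : k ≥ n} : n ∈ ℕ }` of a sequence in `𝓡`. -/
noncomputable def upperLimit (f : ℕ → DecimalRep) : DecimalRep :=
  inf { z | ∃ n : ℕ, z = sup { w | ∃ k : ℕ, n ≤ k ∧ w = f k } }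

/-- The lower limit `sup { inf {f k : k ≥ n} : n ∈ ℕ }` of a sequence in `𝓡`. -/
noncomputable def lowerLimit (f : ℕ → DecimalRep) : DecimalRep :=
  sup { z | ∃ n : ℕ, z = inf { w | ∃ k : ℕ, n ≤ k ∧ w = f k } }

end DecimalRep

/-!
The real value of a decimal representation, `toReal x = lim [x]_k`, lies in the interval
`[[x]_k, [x]_k + 10⁻ᵏ]` for every `k`. Consequently `toReal` is monotone, reflects strict
inequalities, and, since the values of `ι` are dense, carries `sup` and `inf` to suprema and
infima in `ℝ`. It therefore carries `Ψ`, `⊗` and `x⁻¹` to negation, multiplication and inversion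
of real numbers. Finally, two representations of the same real number have no gap: an element
strictly between them would eventually give three distinct integers in an interval
`[10ᵏ r - 1, 10ᵏ r]`.
-/

namespace DecimalRep

open Filter Topology

variable {x y z : DecimalRep}

theorem trunc_zero (x : DecimalRep) : trunc x 0 = x.1 := by
  simp [trunc]

theorem trunc_succ (x : DecimalRep) (k : ℕ) :
    trunc x (k + 1) = trunc x k + ((x.2 k : ℕ) : ℚ) / 10 ^ (k + 1) := by
  simp only [trunc, Finset.sum_range_succ, add_assoc]

theorem monotone_trunc (x : DecimalRep) : Monotone (trunc x) :=
  monotone_nat_of_le_succ fun k => by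
    rw [trunc_succ]
    exact le_add_of_nonneg_right (by positivity)

theorem antitone_trunc_add_inv_ten_pow (x : DecimalRep) :
    Antitone fun k => trunc x k + (10 ^ k)⁻¹ :=
  antitone_nat_of_succ_le fun k => by
    have digit_le : ((x.2 k : ℕ) : ℚ) ≤ 9 := by exact_mod_cast Fin.le_last (x.2 k)
    calc trunc x (k + 1) + (10 ^ (k + 1))⁻¹
        = trunc x k + (x.2 k + 1) / 10 ^ (k + 1) := by rw [trunc_succ]; ring
      _ ≤ trunc x k + 10 / 10 ^ (k + 1) := by gcongr; linarith
      _ = trunc x k + (10 ^ k)⁻¹ := by rw [pow_succ]; field_simp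

/-- The integer `10ᵏ [x]_k`, defined by recursion on the digits: comparing truncations becomes a
question about integers, where distinct values are at least `1` apart. -/
def scaledTrunc (x : DecimalRep) : ℕ → ℤ
  | 0 => x.1
  | k + 1 => 10 * scaledTrunc x k + (x.2 k : ℕ)

theorem trunc_eq_scaledTrunc_div (x : DecimalRep) (k : ℕ) :
    trunc x k = scaledTrunc x k / 10 ^ k := by
  induction k with
  | zero => simp [trunc_zero, scaledTrunc]
  | succ k ih =>
    rw [trunc_succ, ih, scaledTrunc]
    push_cast
    field_simp
    ring

theorem scaledTrunc_succ_ediv_ten (x : DecimalRep) (k : ℕ) :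
    scaledTrunc x (k + 1) / 10 = scaledTrunc x k := by
  have := (x.2 k).isLt
  rw [scaledTrunc]
  lia

theorem le_iff_scaledTrunc_le : le x y ↔ ∀ k, scaledTrunc x k ≤ scaledTrunc y k :=
  forall_congr' fun k => by
    rw [trunc_eq_scaledTrunc_div, trunc_eq_scaledTrunc_div,
      div_le_div_iff_of_pos_right (by positivity), Int.cast_le]

theorem scaledTrunc_injective : Function.Injective scaledTrunc := by
  intro x y h
  refine Prod.ext (congrFun h 0) (funext fun k => Fin.ext ?_)
  have h_succ := congrFun h (k + 1)
  rw [scaledTrunc, scaledTrunc, congrFun h k] at h_succ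
  lia

theorem exists_scaledTrunc_eq {a : ℕ → ℤ} (ha : ∀ k, a (k + 1) / 10 = a k) :
    ∃ x, scaledTrunc x = a := by
  refine ⟨(a 0, fun k => ⟨(a (k + 1) % 10).toNat, by lia⟩), funext fun k => ?_⟩
  induction k with
  | zero => rfl
  | succ k ih =>
    rw [scaledTrunc, ih]
    have := ha k
    simp only
    lia

theorem eventually_scaledTrunc_ne (h : x ≠ y) :
    ∀ᶠ k in atTop, scaledTrunc x k ≠ scaledTrunc y k := by
  obtain ⟨k, hk⟩ := Function.ne_iff.1 (scaledTrunc_injective.ne h)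
  filter_upwards [eventually_ge_atTop k] with m hkm
  induction m, hkm using Nat.le_induction with
  | base => exact hk
  | succ m _ ih =>
    rw [← scaledTrunc_succ_ediv_ten x, ← scaledTrunc_succ_ediv_ten y] at ih
    exact fun h_eq => ih (congrArg (· / 10) h_eq)

theorem le.antisymm (hxy : le x y) (hyx : le y x) : x = y :=
  scaledTrunc_injective <| funext fun k =>
    (le_iff_scaledTrunc_le.1 hxy k).antisymm (le_iff_scaledTrunc_le.1 hyx k)

theorem scaledTrunc_iota (α : ℚ) (k : ℕ) : scaledTrunc (iota α) k = ⌊α * 10 ^ k⌋ := by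
  induction k with
  | zero => simp [scaledTrunc, iota]
  | succ k ih =>
    have floor_div : ⌊α * 10 ^ (k + 1)⌋ / 10 = ⌊α * 10 ^ k⌋ := by
      rw [pow_succ, ← mul_assoc]
      simpa using (Int.floor_div_natCast (α * 10 ^ k * 10) 10).symm
    rw [scaledTrunc, ih]
    simp only [iota]
    lia

theorem trunc_iota (α : ℚ) (k : ℕ) : trunc (iota α) k = ⌊α * 10 ^ k⌋ / 10 ^ k := by
  rw [trunc_eq_scaledTrunc_div, scaledTrunc_iota]

theorem trunc_iota_zero (k : ℕ) : trunc (iota 0) k = 0 := by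
  simp [trunc_iota]

theorem trunc_psi (x : DecimalRep) (k : ℕ) : trunc (psi x) k = -trunc x k - (10 ^ k)⁻¹ := by
  induction k with
  | zero => simp [trunc_zero, psi]; ring
  | succ k ih =>
    have digit_psi : (((psi x).2 k : ℕ) : ℚ) = 9 - (x.2 k : ℕ) :=
      Nat.cast_sub (Fin.le_last (x.2 k))
    rw [trunc_succ, trunc_succ, ih, digit_psi]
    field_simp
    ring

/-- The real number represented by `x`, the supremum (and limit) of its truncations. -/
noncomputable def toReal (x : DecimalRep) : ℝ :=
  ⨆ k, (trunc x k : ℝ)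

theorem toReal_mem_Icc (x : DecimalRep) (k : ℕ) :
    toReal x ∈ Set.Icc (trunc x k : ℝ) (trunc x k + (10 ^ k)⁻¹) := by
  have upper_antitone : Antitone fun k => (trunc x k : ℝ) + (10 ^ k)⁻¹ := fun m n hmn => by
    simpa using (Rat.cast_le (K := ℝ)).2 (antitone_trunc_add_inv_ten_pow x hmn)
  exact Set.mem_iInter.1 ((Rat.cast_mono.comp (monotone_trunc x)).ciSup_mem_iInter_Icc_of_antitone
    upper_antitone fun k => le_add_of_nonneg_right (by positivity)) k

theorem trunc_le_toReal (x : DecimalRep) (k : ℕ) : trunc x k ≤ toReal x :=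
  (toReal_mem_Icc x k).1

theorem tendsto_trunc (x : DecimalRep) : Tendsto (fun k => (trunc x k : ℝ)) atTop (𝓝 (toReal x)) :=
  tendsto_atTop_ciSup (Rat.cast_mono.comp (monotone_trunc x))
    ⟨toReal x, Set.forall_mem_range.2 (trunc_le_toReal x)⟩

theorem scaledTrunc_mem_Icc (x : DecimalRep) (k : ℕ) :
    (scaledTrunc x k : ℝ) ∈ Set.Icc (toReal x * 10 ^ k - 1) (toReal x * 10 ^ k) := by
  have h := toReal_mem_Icc x k
  rw [trunc_eq_scaledTrunc_div, Set.mem_Icc] at h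
  push_cast at h
  rw [div_le_iff₀ (by positivity), ← one_div, ← add_div, le_div_iff₀ (by positivity)] at h
  exact ⟨by linarith, h.1⟩

theorem toReal_mono (h : le x y) : toReal x ≤ toReal y :=
  le_of_tendsto_of_tendsto' (tendsto_trunc x) (tendsto_trunc y) fun k => by exact_mod_cast h k

theorem le_of_toReal_lt (h : toReal x < toReal y) : le x y := by
  refine le_iff_scaledTrunc_le.2 fun k => Int.lt_add_one_iff.1 ?_
  rify
  calc (scaledTrunc x k : ℝ) ≤ toReal x * 10 ^ k := (scaledTrunc_mem_Icc x k).2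
    _ < toReal y * 10 ^ k := by gcongr
    _ ≤ scaledTrunc y k + 1 := sub_le_iff_le_add.1 (scaledTrunc_mem_Icc y k).1

theorem eq_or_eq_of_toReal_eq (hxz : le x z) (hzy : le z y) (h : toReal x = toReal y) :
    z = x ∨ z = y := by
  by_contra! h_ne
  obtain ⟨k, hzx_k, hzy_k⟩ :=
    ((eventually_scaledTrunc_ne h_ne.1).and (eventually_scaledTrunc_ne h_ne.2)).exists
  have gap_le_one : scaledTrunc y k ≤ scaledTrunc x k + 1 := by
    have hx := (scaledTrunc_mem_Icc x k).1
    have hy := (scaledTrunc_mem_Icc y k).2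
    rw [h] at hx
    rify
    linarith
  have hxz_k := le_iff_scaledTrunc_le.1 hxz k
  have hzy_k' := le_iff_scaledTrunc_le.1 hzy k
  lia

theorem equiv_of_toReal_eq (h : toReal x = toReal y) : equiv x y := by
  rintro ⟨z, hzx, hzy, ⟨hxz, hzy'⟩ | ⟨hyz, hzx'⟩⟩
  · exact (eq_or_eq_of_toReal_eq hxz hzy' h).elim hzx hzy
  · exact (eq_or_eq_of_toReal_eq hyz hzx' h.symm).elim hzy hzx

theorem tendsto_inv_ten_pow : Tendsto (fun k : ℕ => ((10 : ℝ) ^ k)⁻¹) atTop (𝓝 0) :=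
  tendsto_inv_atTop_zero.comp (tendsto_pow_atTop_atTop_of_one_lt (by norm_num))

theorem toReal_iota (α : ℚ) : toReal (iota α) = α := by
  have lower_tendsto : Tendsto (fun k : ℕ => (α : ℝ) - (10 ^ k)⁻¹) atTop (𝓝 α) := by
    simpa using tendsto_const_nhds.sub tendsto_inv_ten_pow
  refine tendsto_nhds_unique (tendsto_trunc _)
    (tendsto_of_tendsto_of_tendsto_of_le_of_le lower_tendsto tendsto_const_nhds
      (fun k => ?_) fun k => ?_)
  · suffices α - (10 ^ k)⁻¹ ≤ trunc (iota α) k by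
      simpa using (Rat.cast_le (K := ℝ)).2 this
    rw [trunc_iota, le_div_iff₀ (by positivity), sub_mul, inv_mul_cancel₀ (by positivity)]
    exact (Int.sub_one_lt_floor _).le
  · suffices trunc (iota α) k ≤ α from Rat.cast_le.2 this
    rw [trunc_iota, div_le_iff₀ (by positivity)]
    exact Int.floor_le _

theorem toReal_psi (x : DecimalRep) : toReal (psi x) = -toReal x := by
  refine tendsto_nhds_unique (tendsto_trunc _) ?_
  simpa [trunc_psi] using (tendsto_trunc x).neg.sub tendsto_inv_ten_pow

theorem toReal_iterate_psi (n : ℕ) (x : DecimalRep) :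
    toReal (psi^[n] x) = (-1) ^ n * toReal x := by
  induction n with
  | zero => simp
  | succ n ih => rw [Function.iterate_succ_apply', toReal_psi, ih, pow_succ]; ring

theorem exists_isLub {W : Set DecimalRep} (hW : W.Nonempty) (hb : ∃ b, ∀ w ∈ W, le w b) :
    ∃ M, IsLub W M := by
  have exists_max : ∀ k, ∃ w ∈ W, ∀ v ∈ W, scaledTrunc v k ≤ scaledTrunc w k := by
    intro k
    obtain ⟨b, hb⟩ := hb
    have bdd : BddAbove ((scaledTrunc · k) '' W) :=
      ⟨scaledTrunc b k, Set.forall_mem_image.2 fun w hw => le_iff_scaledTrunc_le.1 (hb w hw) k⟩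
    obtain ⟨w, hw, hw_eq⟩ := Int.csSup_mem (hW.image _) bdd
    exact ⟨w, hw, fun v hv => (le_csSup bdd ⟨v, hv, rfl⟩).trans_eq hw_eq.symm⟩
  choose w hw w_max using exists_max
  obtain ⟨M, hM⟩ := exists_scaledTrunc_eq (a := fun k => scaledTrunc (w k) k) fun k => by
    refine le_antisymm ?_ ?_
    · rw [scaledTrunc_succ_ediv_ten]
      exact w_max k _ (hw (k + 1))
    · rw [← scaledTrunc_succ_ediv_ten]
      exact Int.ediv_le_ediv (by norm_num) (w_max (k + 1) _ (hw k))
  refine ⟨M, fun v hv => ?_, fun b hb => ?_⟩ <;> rw [le_iff_scaledTrunc_le, hM]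
  · exact fun k => w_max k v hv
  · exact fun k => le_iff_scaledTrunc_le.1 (hb _ (hw k)) k

theorem exists_isGlb {W : Set DecimalRep} (hW : W.Nonempty) (hb : ∃ b, ∀ w ∈ W, le b w) :
    ∃ M, IsGlb W M := by
  obtain ⟨w₀, hw₀⟩ := hW
  obtain ⟨M, hM_upper, hM_least⟩ :=
    exists_isLub (W := {b | ∀ w ∈ W, le b w}) hb ⟨w₀, fun b hb => hb w₀ hw₀⟩
  exact ⟨M, fun w hw => hM_least w fun b hb => hb w hw, hM_upper⟩

theorem IsLub.isLUB_toReal {W : Set DecimalRep} {M : DecimalRep} (h : IsLub W M) :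
    IsLUB (toReal '' W) (toReal M) := by
  refine ⟨Set.forall_mem_image.2 fun w hw => toReal_mono (h.1 w hw), fun r hr => ?_⟩
  refine le_of_forall_lt_rat_imp_le fun q hq => ?_
  have M_le : le M (iota q) := h.2 _ fun w hw =>
    le_of_toReal_lt ((hr ⟨w, hw, rfl⟩).trans_lt (by rwa [toReal_iota]))
  simpa only [toReal_iota] using toReal_mono M_le

theorem IsGlb.isGLB_toReal {W : Set DecimalRep} {M : DecimalRep} (h : IsGlb W M) :
    IsGLB (toReal '' W) (toReal M) := by
  refine ⟨Set.forall_mem_image.2 fun w hw => toReal_mono (h.1 w hw), fun r hr => ?_⟩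
  refine le_of_forall_rat_lt_imp_le fun q hq => ?_
  have le_M : le (iota q) M := h.2 _ fun w hw =>
    le_of_toReal_lt (((toReal_iota q).trans_lt hq).trans_le (hr ⟨w, hw, rfl⟩))
  simpa only [toReal_iota] using toReal_mono le_M

theorem toReal_sup_of_isLUB {W : Set DecimalRep} {r : ℝ} (h : IsLUB (toReal '' W) r) :
    toReal (sup W) = r := by
  obtain ⟨q, hq⟩ := exists_rat_gt r
  have exists_lub : ∃ M, IsLub W M := exists_isLub h.nonempty.of_image ⟨iota q, fun w hw =>
    le_of_toReal_lt ((h.1 ⟨w, hw, rfl⟩).trans_lt (by rwa [toReal_iota]))⟩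
  rw [sup, dif_pos exists_lub]
  exact exists_lub.choose_spec.isLUB_toReal.unique h

theorem toReal_inf_of_isGLB {W : Set DecimalRep} {r : ℝ} (h : IsGLB (toReal '' W) r) :
    toReal (inf W) = r := by
  obtain ⟨q, hq⟩ := exists_rat_lt r
  have exists_glb : ∃ M, IsGlb W M := exists_isGlb h.nonempty.of_image ⟨iota q, fun w hw =>
    le_of_toReal_lt (((toReal_iota q).trans_lt hq).trans_le (h.1 ⟨w, hw, rfl⟩))⟩
  rw [inf, dif_pos exists_glb]
  exact exists_glb.choose_spec.isGLB_toReal.unique h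

theorem toReal_norm (x : DecimalRep) : toReal (norm x) = |toReal x| := by
  rw [norm]
  split_ifs with h
  · have le_neg : toReal x ≤ -toReal x := toReal_psi x ▸ toReal_mono h
    rw [toReal_psi, abs_of_nonpos (by linarith)]
  · have neg_le : -toReal x ≤ toReal x := toReal_psi x ▸ le_of_not_gt (mt le_of_toReal_lt h)
    rw [abs_of_nonneg (by linarith)]

theorem neg_one_pow_sign_mul_abs_toReal (x : DecimalRep) :
    (-1) ^ sign x * |toReal x| = toReal x := by
  rw [sign]
  split_ifs with h
  · have nonneg : 0 ≤ toReal x := by simpa [toReal_iota] using toReal_mono h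
    simp [abs_of_nonneg nonneg]
  · have nonpos : toReal x ≤ 0 := by simpa [toReal_iota] using mt le_of_toReal_lt h
    simp [abs_of_nonpos nonpos]

theorem trunc_norm_nonneg (x : DecimalRep) (k : ℕ) : 0 ≤ trunc (norm x) k := by
  suffices integer_part_nonneg : 0 ≤ (norm x).1 from
    calc (0 : ℚ) ≤ (norm x).1 := Int.cast_nonneg integer_part_nonneg
      _ = trunc (norm x) 0 := (trunc_zero _).symm
      _ ≤ trunc (norm x) k := monotone_trunc _ k.zero_le
  rw [norm]
  split_ifs with h
  · have integer_part_le : x.1 ≤ -1 - x.1 := le_iff_scaledTrunc_le.1 h 0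
    simp only [psi]
    lia
  · contrapose! h
    intro k
    have integer_part_le : (x.1 : ℚ) ≤ -1 := by exact_mod_cast Int.le_sub_one_of_lt h
    have upper_le : trunc x k + (10 ^ k)⁻¹ ≤ x.1 + 1 := by
      simpa [trunc_zero] using antitone_trunc_add_inv_ten_pow x k.zero_le
    have inv_pow_pos : (0 : ℚ) < (10 ^ k)⁻¹ := by positivity
    rw [trunc_psi]
    linarith

theorem isLUB_toReal_trunc_norm_mul (x y : DecimalRep) :
    IsLUB (toReal '' {z | ∃ k, z = iota (trunc (norm x) k * trunc (norm y) k)})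
      |toReal x * toReal y| := by
  have image_eq : toReal '' {z | ∃ k, z = iota (trunc (norm x) k * trunc (norm y) k)} =
      Set.range fun k => ((trunc (norm x) k * trunc (norm y) k : ℚ) : ℝ) := by
    refine Set.Subset.antisymm ?_ ?_
    · rintro _ ⟨_, ⟨k, rfl⟩, rfl⟩
      exact ⟨k, (toReal_iota _).symm⟩
    · rintro _ ⟨k, rfl⟩
      exact ⟨_, ⟨k, rfl⟩, toReal_iota _⟩
  rw [image_eq, abs_mul, ← toReal_norm, ← toReal_norm]
  refine isLUB_of_tendsto_atTop (fun m n hmn => Rat.cast_le.2 ?_) ?_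
  · exact mul_le_mul (monotone_trunc _ hmn) (monotone_trunc _ hmn)
      (trunc_norm_nonneg _ _) (trunc_norm_nonneg _ _)
  · simpa only [Rat.cast_mul] using (tendsto_trunc (norm x)).mul (tendsto_trunc (norm y))

theorem toReal_mul (x y : DecimalRep) : toReal (mul x y) = toReal x * toReal y :=
  calc toReal (mul x y)
      = (-1) ^ (sign x + sign y) * |toReal x * toReal y| := by
        rw [mul, toReal_iterate_psi, toReal_sup_of_isLUB (isLUB_toReal_trunc_norm_mul x y)]
    _ = ((-1) ^ sign x * |toReal x|) * ((-1) ^ sign y * |toReal y|) := by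
        rw [pow_add, abs_mul, mul_mul_mul_comm]
    _ = toReal x * toReal y := by simp only [neg_one_pow_sign_mul_abs_toReal]

theorem isGLB_toReal_inv_trunc_norm (hx : toReal x ≠ 0) :
    IsGLB (toReal '' {z | ∃ k, 0 < trunc (norm x) k ∧ z = iota (1 / trunc (norm x) k)})
      |toReal x|⁻¹ := by
  rw [← toReal_norm]
  have norm_pos : 0 < toReal (norm x) := by rwa [toReal_norm, abs_pos]
  have toReal_iota_inv (k : ℕ) :
      toReal (iota (1 / trunc (norm x) k)) = (trunc (norm x) k : ℝ)⁻¹ := by simp [toReal_iota]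
  constructor
  · rintro _ ⟨_, ⟨k, hk, rfl⟩, rfl⟩
    rw [toReal_iota_inv]
    exact inv_anti₀ (Rat.cast_pos.2 hk) (trunc_le_toReal _ k)
  · intro r hr
    refine ge_of_tendsto ((tendsto_trunc (norm x)).inv₀ norm_pos.ne') ?_
    filter_upwards [(tendsto_trunc (norm x)).eventually_const_lt norm_pos] with k hk
    rw [← toReal_iota_inv]
    exact hr ⟨_, ⟨k, Rat.cast_pos.1 hk, rfl⟩, rfl⟩

theorem toReal_inv (hx : toReal x ≠ 0) : toReal (inv x) = (toReal x)⁻¹ :=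
  calc toReal (inv x)
      = (-1) ^ sign x * |toReal x|⁻¹ := by
        rw [inv, toReal_iterate_psi, toReal_inf_of_isGLB (isGLB_toReal_inv_trunc_norm hx)]
    _ = ((-1) ^ sign x * |toReal x|)⁻¹ := by rw [mul_inv, ← inv_pow, inv_neg_one]
    _ = (toReal x)⁻¹ := by rw [neg_one_pow_sign_mul_abs_toReal]

theorem toReal_pos_of_lt (h : lt (iota 0) x) : 0 < toReal x := by
  by_contra! hx
  refine h.2 (h.1.antisymm fun k => ?_)
  rw [trunc_iota_zero]
  exact_mod_cast (trunc_le_toReal x k).trans hx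

end DecimalRep

open DecimalRep in
/-- If `‖x‖ ≻ ι(0)` then `x ⊗ x⁻¹ ∼ ι(1)`. -/
theorem mul_inv_equiv_one (x : DecimalRep) (hx : lt (iota 0) (norm x)) :
    equiv (mul x (inv x)) (iota 1) := by
  have hx₀ : toReal x ≠ 0 := by
    rw [← abs_pos, ← toReal_norm]
    exact toReal_pos_of_lt hx
  apply equiv_of_toReal_eq
  rw [toReal_mul, toReal_inv hx₀, mul_inv_cancel₀ hx₀, toReal_iota, Rat.cast_one]
end

section
/- No rational number has a decimal expansion ending in an infinite string of nines: the range of ι is disjoint from 𝓡₉, i.e. for every α ∈ ℚ, ι(α) ∉ 𝓡₉. -/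
/-!
The gap `1 - fract (x * b ^ k)` between `x * b ^ k` and the next integer is positive, and passing
from `k` to `k + 1` multiplies it by `b` whenever the digit read off is `b - 1`. An infinite string
of such digits would make it grow geometrically, although it never exceeds `1`.
-/

theorem exists_one_lt_mul_natCast_pow {R : Type*} [Semiring R] [PartialOrder R]
    [IsStrictOrderedRing R] [Archimedean R] {b : ℕ} (hb : 1 < b) {ε : R} (hε : 0 < ε) :
    ∃ k : ℕ, 1 < ε * (b : R) ^ k := by
  obtain ⟨n, hn⟩ := Archimedean.arch 1 hε
  refine ⟨n, ?_⟩
  calc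
    1 ≤ ε * n := by rwa [nsmul_eq_mul'] at hn
    _ < ε * (b : R) ^ n := by
      gcongr
      exact_mod_cast Nat.lt_pow_self hb

section BaseDigit

open Filter

variable {K : Type*} [Ring K] [LinearOrder K] [FloorRing K] {b : ℕ}

/-- The digit of `x` with weight `b ^ (-(k + 1))` in its base-`b` floor expansion, the one whose
truncations are `⌊x * b ^ k⌋ / b ^ k`. It is kept as an integer, and `k = 0` is the first digit
after the point, as in `DecimalRep`. -/
def baseDigit (b : ℕ) (x : K) (k : ℕ) : ℤ :=
  ⌊x * (b : K) ^ (k + 1)⌋ % b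

theorem baseDigit_mul_pow (x : K) (n k : ℕ) :
    baseDigit b (x * (b : K) ^ n) k = baseDigit b x (n + k) := by
  rw [baseDigit, baseDigit, mul_assoc, ← pow_add, add_assoc]

variable [IsStrictOrderedRing K]

theorem fract_mul_natCast_eq_emod_add_fract (hb : b ≠ 0) (x : K) :
    Int.fract x * b = (⌊x * b⌋ % b : ℤ) + Int.fract (x * b) := by
  have floor_mul : ⌊x⌋ * b + ⌊x * b⌋ % b = ⌊x * b⌋ := by
    rw [← Int.mul_natCast_floor_div_cancel hb x, Int.ediv_mul_add_emod]
  have floor_mul_cast : (⌊x⌋ : K) * b + (⌊x * b⌋ % b : ℤ) = ⌊x * b⌋ := by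
    exact_mod_cast floor_mul
  rw [Int.fract, Int.fract, sub_mul, ← floor_mul_cast]
  abel

theorem one_sub_fract_mul_pow_succ (hb : b ≠ 0) {x : K} {k : ℕ}
    (hk : baseDigit b x k = b - 1) :
    1 - Int.fract (x * (b : K) ^ (k + 1)) = (1 - Int.fract (x * (b : K) ^ k)) * b := by
  have expansion := fract_mul_natCast_eq_emod_add_fract hb (x * (b : K) ^ k)
  rw [mul_assoc, ← pow_succ, ← baseDigit, hk] at expansion
  push_cast at expansion
  rw [sub_mul, one_mul, expansion]
  abel

theorem one_sub_fract_mul_pow (hb : b ≠ 0) {x : K} (hx : ∀ k, baseDigit b x k = b - 1) (k : ℕ) :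
    1 - Int.fract (x * (b : K) ^ k) = (1 - Int.fract x) * (b : K) ^ k := by
  induction k with
  | zero => simp
  | succ k ih => rw [one_sub_fract_mul_pow_succ hb (hx k), ih, pow_succ, mul_assoc]

theorem exists_baseDigit_ne [Archimedean K] (hb : 1 < b) (x : K) :
    ∃ k, baseDigit b x k ≠ b - 1 := by
  by_contra! hx
  obtain ⟨k, hk⟩ := exists_one_lt_mul_natCast_pow hb (sub_pos.2 (Int.fract_lt_one x))
  have gap_le_one : 1 - Int.fract (x * (b : K) ^ k) ≤ 1 := sub_le_self _ (Int.fract_nonneg _)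
  rw [one_sub_fract_mul_pow (by lia) hx] at gap_le_one
  exact gap_le_one.not_gt hk

theorem iota_not_allNines_general [Archimedean K] (hb : 1 < b) (x : K) :
    ¬ ∀ᶠ k in atTop, baseDigit b x k = b - 1 := by
  intro h
  obtain ⟨N, hN⟩ := eventually_atTop.1 h
  obtain ⟨k, hk⟩ := exists_baseDigit_ne hb (x * (b : K) ^ N)
  exact hk (by rw [baseDigit_mul_pow, hN _ (Nat.le_add_right N k)])

end BaseDigit

namespace DecimalRep

open Filter

theorem iota_snd_eq_baseDigit (α : ℚ) (k : ℕ) :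
    (((iota α).2 k : ℕ) : ℤ) = baseDigit 10 α k :=
  Int.toNat_of_nonneg (Int.emod_nonneg _ (by norm_num))

theorem allNines_iota_iff (α : ℚ) :
    allNines (iota α) ↔ ∀ᶠ k in atTop, baseDigit 10 α k = 9 := by
  simp only [allNines, eventually_atTop, ← iota_snd_eq_baseDigit, Fin.ext_iff]
  norm_cast

end DecimalRep

open DecimalRep in
/-- No rational number has a decimal expansion ending in an infinite string of
nines. -/
theorem iota_not_allNines (α : ℚ) : ¬ allNines (iota α) :=
  fun h => iota_not_allNines_general (b := 10) (by norm_num) α ((allNines_iota_iff α).1 h)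
end

section
/- An element x = x₀.x₁x₂x₃⋯ ∈ 𝓡 lies in the range of ι or in 𝓡₉ if and only if its digit sequence ends with infinite recurrence of a block of digits, i.e. there exist N ∈ ℕ and s ∈ ℕ with s ≥ 1 such that x_{i+s} = x_i for all i ≥ N. (Equivalently: x is irrational — neither a decimal expansion of a rational nor eventually all nines — iff its digit sequence is not eventually periodic.) -/
/-!
Long division of `m` by `n` in base `b` runs through the remainders `m * b ^ i % n`. Each remainder
is determined by its predecessor, so they eventually cycle, and so do the digits. Conversely, if the
tail `t` of a digit sequence is periodic with period `s`, then `t * b ^ s = k + t` for a natural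
number `k`, so `t`, and with it the whole number, is rational. The expansion of that number gives
back the original digits unless these end in nines, because only then can a tail have value `1`.
-/

/-- Eventual periodicity of a sequence. The period `s` has to be positive, since every sequence
satisfies the condition with `s = 0`. -/
def EventuallyPeriodic {α : Type*} (u : ℕ → α) : Prop :=
  ∃ N s : ℕ, 1 ≤ s ∧ ∀ i : ℕ, N ≤ i → u (i + s) = u i

namespace EventuallyPeriodic

variable {α β : Type*} {u : ℕ → α}

theorem comp (hu : EventuallyPeriodic u) (g : α → β) : EventuallyPeriodic (g ∘ u) := by
  obtain ⟨N, s, hs, h⟩ := hu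
  exact ⟨N, s, hs, fun i hi ↦ congrArg g (h i hi)⟩

theorem of_eventually_const {N : ℕ} {a : α} (h : ∀ i ≥ N, u i = a) : EventuallyPeriodic u :=
  ⟨N, 1, le_rfl, fun i hi ↦ by rw [h i hi, h (i + 1) (by lia)]⟩

theorem of_recurrence [Finite α] {f : α → α} (h : ∀ i, u (i + 1) = f (u i)) :
    EventuallyPeriodic u := by
  obtain ⟨N, M, hNM, hu⟩ : ∃ N M, N < M ∧ u N = u M := by
    obtain ⟨N, M, hne, hu⟩ := Finite.exists_ne_map_eq_of_infinite u
    rcases hne.lt_or_gt with hlt | hlt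
    exacts [⟨N, M, hlt, hu⟩, ⟨M, N, hlt, hu.symm⟩]
  refine ⟨N, M - N, by lia, fun i hi ↦ ?_⟩
  induction i, hi using Nat.le_induction with
  | base => rw [Nat.add_sub_cancel' hNM.le, hu]
  | succ i _ ih => rw [Nat.add_right_comm, h, h, ih]

end EventuallyPeriodic

theorem digits_natCast_div_natCast (m n b i : ℕ) [NeZero n] [NeZero b] :
    Real.digits (m / n) b i = Fin.ofNat b (m * b ^ i % n * b / n) := by
  have floor_eq : ⌊(m / n * b ^ (i + 1) : ℝ)⌋₊ = m * b ^ i * b / n := by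
    rw [← Nat.floor_div_eq_div (K := ℝ)]
    push_cast
    ring_nf
  have div_eq : m * b ^ i * b / n = m * b ^ i % n * b / n + b * (m * b ^ i / n) := by
    conv_lhs => rw [← Nat.mod_add_div (m * b ^ i) n]
    rw [add_mul, mul_assoc n, Nat.add_mul_div_left _ _ (NeZero.pos n), mul_comm b]
  apply Fin.ext
  simp only [Real.digits, floor_eq, div_eq, Fin.val_ofNat, Nat.add_mul_mod_self_left]

theorem eventuallyPeriodic_digits_ratCast {q : ℚ} (hq : 0 ≤ q) (b : ℕ) [NeZero b] :
    EventuallyPeriodic (Real.digits q b) := by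
  lift q to ℚ≥0 using hq
  have : NeZero q.den := ⟨q.den_ne_zero⟩
  have remainders : EventuallyPeriodic fun i ↦ ((q.num * b ^ i : ℕ) : ZMod q.den) :=
    .of_recurrence (f := (· * (b : ZMod q.den))) fun i ↦ by push_cast; ring
  convert! remainders.comp fun r ↦ Fin.ofNat b (r.val * b / q.den) using 1
  ext1 i
  rw [Rat.cast_nnratCast, NNRat.cast_def, digits_natCast_div_natCast, Function.comp_apply,
    ZMod.val_natCast]

section OfDigits

variable {b : ℕ}

theorem ofDigits_mul_base (d : ℕ → Fin b) :
    Real.ofDigits d * b = d 0 + Real.ofDigits fun i ↦ d (i + 1) := by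
  have hb : (b : ℝ) ≠ 0 := by exact_mod_cast (d 0).pos.ne'
  rw [Real.ofDigits_eq_sum_add_ofDigits d 1, Finset.sum_range_one, Real.ofDigitsTerm, zero_add,
    pow_one]
  field_simp

theorem exists_ofDigits_mul_pow_eq_natCast_add (d : ℕ → Fin b) (n : ℕ) :
    ∃ k : ℕ, Real.ofDigits d * b ^ n = k + Real.ofDigits fun i ↦ d (i + n) := by
  induction n with
  | zero => exact ⟨0, by simp⟩
  | succ n ih =>
    obtain ⟨k, hk⟩ := ih
    refine ⟨k * b + d n, ?_⟩
    rw [pow_succ, ← mul_assoc, hk, add_mul, ofDigits_mul_base, zero_add]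
    push_cast
    simp only [add_assoc, add_comm 1 n]

theorem EventuallyPeriodic.exists_ratCast_eq_ofDigits {d : ℕ → Fin b} (hd : EventuallyPeriodic d)
    (hb : 1 < b) : ∃ q : ℚ, (q : ℝ) = Real.ofDigits d := by
  obtain ⟨N, s, hs, hper⟩ := hd
  set t := Real.ofDigits fun i ↦ d (i + N)
  obtain ⟨k, hk⟩ : ∃ k : ℕ, Real.ofDigits d * b ^ N = k + t :=
    exists_ofDigits_mul_pow_eq_natCast_add d N
  obtain ⟨l, hl⟩ : ∃ l : ℕ, t * b ^ s = l + t := by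
    obtain ⟨l, hl⟩ := exists_ofDigits_mul_pow_eq_natCast_add (fun i ↦ d (i + N)) s
    have shift_eq : (fun i ↦ d (i + s + N)) = fun i ↦ d (i + N) :=
      funext fun i ↦ by rw [Nat.add_right_comm, hper _ (Nat.le_add_left N i)]
    exact ⟨l, by rwa [shift_eq] at hl⟩
  have hbN : (b : ℝ) ^ N ≠ 0 := by positivity
  have hbs : (b : ℝ) ^ s - 1 ≠ 0 :=
    (sub_pos.2 (one_lt_pow₀ (by exact_mod_cast hb) (by lia))).ne'
  have t_eq : t = l / (b ^ s - 1) := by rw [eq_div_iff hbs]; linarith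
  refine ⟨(k + l / (b ^ s - 1)) / b ^ N, ?_⟩
  push_cast
  rw [← t_eq, ← hk, mul_div_cancel_right₀ _ hbN]

theorem ofDigits_lt_one_of_add_one_ne {d : ℕ → Fin b} {i : ℕ} (hi : (d i : ℕ) + 1 ≠ b) :
    Real.ofDigits d < 1 := by
  have hb : (0 : ℝ) < b := by exact_mod_cast (d 0).pos
  suffices Real.ofDigits d * b < b from (mul_lt_iff_lt_one_left hb).1 this
  rw [ofDigits_mul_base]
  induction i generalizing d with
  | zero =>
    have head_lt : (d 0 : ℝ) + 1 < b := by exact_mod_cast lt_of_le_of_ne (d 0).isLt hi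
    linarith [Real.ofDigits_le_one fun i ↦ d (i + 1)]
  | succ i ih =>
    have head_le : (d 0 : ℝ) + 1 ≤ b := by exact_mod_cast (d 0).isLt
    have tail_lt : Real.ofDigits (fun i ↦ d (i + 1)) < 1 := by
      rw [← mul_lt_iff_lt_one_left hb, ofDigits_mul_base]
      exact ih (d := fun i ↦ d (i + 1)) hi
    linarith

theorem digits_ofDigits [NeZero b] {d : ℕ → Fin b}
    (hd : ∃ᶠ i in Filter.atTop, (d i : ℕ) + 1 ≠ b) : Real.digits (Real.ofDigits d) b = d := by
  ext n
  obtain ⟨k, hk⟩ := exists_ofDigits_mul_pow_eq_natCast_add d n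
  set t := Real.ofDigits fun i ↦ d (i + (n + 1)) with ht
  have t_lt_one : t < 1 := by
    obtain ⟨i, hi, hne⟩ := Filter.frequently_atTop.1 hd (n + 1)
    exact ofDigits_lt_one_of_add_one_ne (i := i - (n + 1)) (by rwa [Nat.sub_add_cancel hi])
  have floor_eq : ⌊Real.ofDigits d * b ^ (n + 1)⌋₊ = d n + b * k := by
    rw [Nat.floor_eq_iff (mul_nonneg (Real.ofDigits_nonneg d) (by positivity))]
    have shifted : Real.ofDigits d * b ^ (n + 1) = (d n + b * k : ℕ) + t := by
      rw [pow_succ, ← mul_assoc, hk, add_mul, ofDigits_mul_base, zero_add, ht]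
      push_cast
      simp only [add_assoc, add_comm 1 n]
      ring
    rw [shifted]
    exact ⟨le_add_of_nonneg_right (Real.ofDigits_nonneg _), by gcongr⟩
  rw [Real.digits, floor_eq, Fin.val_ofNat, Nat.add_mul_mod_self_left, Nat.mod_eq_of_lt (d n).isLt]

end OfDigits

namespace DecimalRep

theorem iota_snd (α : ℚ) : (iota α).2 = Real.digits (Int.fract α : ℚ) 10 := by
  ext k
  have fract_nonneg : (0 : ℝ) ≤ (Int.fract α : ℚ) := by exact_mod_cast Int.fract_nonneg α
  have split : α * 10 ^ (k + 1) = Int.fract α * 10 ^ (k + 1) + (10 * (⌊α⌋ * 10 ^ k) : ℤ) := by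
    nth_rw 1 [← Int.fract_add_floor α]
    push_cast
    ring
  have floor_eq : ⌊Int.fract α * 10 ^ (k + 1)⌋ =
      ⌊((Int.fract α : ℚ) * (10 : ℕ) ^ (k + 1) : ℝ)⌋₊ := by
    rw [Int.natCast_floor_eq_floor (mul_nonneg fract_nonneg (by positivity)),
      ← Rat.floor_cast (α := ℝ), Rat.cast_mul, Rat.cast_pow, Rat.cast_ofNat, Nat.cast_ofNat]
  rw [Real.digits, Fin.val_ofNat]
  change (⌊α * 10 ^ (k + 1)⌋ % 10).toNat = _
  rw [split, Int.floor_add_intCast, floor_eq]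
  lia

theorem frequently_add_one_ne_ten_of_not_allNines {x : DecimalRep} (hx : ¬ allNines x) :
    ∃ᶠ i in Filter.atTop, (x.2 i : ℕ) + 1 ≠ 10 := by
  simp only [allNines, not_exists, not_forall] at hx
  refine Filter.frequently_atTop.2 fun N ↦ ?_
  obtain ⟨i, hi, hne⟩ := hx N
  exact ⟨i, hi, fun h ↦ hne (Fin.ext (by simpa using h))⟩

theorem iota_eq_of_ratCast_eq_ofDigits {x : DecimalRep} (hx : ¬ allNines x) {q : ℚ}
    (hq : (q : ℝ) = Real.ofDigits x.2) : iota (x.1 + q) = x := by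
  have hfreq := frequently_add_one_ne_ten_of_not_allNines hx
  have q_nonneg : 0 ≤ q := by exact_mod_cast hq ▸ Real.ofDigits_nonneg x.2
  have q_lt_one : q < 1 := by
    obtain ⟨i, hi⟩ := hfreq.exists
    exact_mod_cast hq ▸ ofDigits_lt_one_of_add_one_ne hi
  refine Prod.ext ?_ ?_
  · change ⌊(x.1 : ℚ) + q⌋ = x.1
    rw [Int.floor_intCast_add, Int.floor_eq_zero_iff.2 ⟨q_nonneg, q_lt_one⟩, add_zero]
  · rw [iota_snd, Int.fract_intCast_add, Int.fract_eq_self.2 ⟨q_nonneg, q_lt_one⟩, hq,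
      digits_ofDigits hfreq]

end DecimalRep

open DecimalRep in
/-- An element of `𝓡` is a decimal expansion of a rational or ends in all
nines iff its digit sequence is eventually periodic. -/
theorem rational_or_allNines_iff_eventually_periodic (x : DecimalRep) :
    ((∃ α : ℚ, iota α = x) ∨ allNines x) ↔
      ∃ N s : ℕ, 1 ≤ s ∧ ∀ i : ℕ, N ≤ i → x.2 (i + s) = x.2 i := by
  constructor
  · rintro (⟨α, rfl⟩ | ⟨N, hN⟩)
    · rw [iota_snd]
      exact eventuallyPeriodic_digits_ratCast (Int.fract_nonneg α) 10
    · exact EventuallyPeriodic.of_eventually_const hN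
  · intro (hper : EventuallyPeriodic x.2)
    obtain ⟨q, hq⟩ := hper.exists_ratCast_eq_ofDigits (by norm_num)
    by_cases hx : allNines x
    · exact Or.inr hx
    · exact Or.inl ⟨x.1 + q, iota_eq_of_ratCast_eq_ofDigits hx hq⟩
end
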